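/- arXiv:2102.01575 — 3 statements merged into one kernel-verified Lean document; each statement's English description precedes it below -/
import Mathlib

section
/- Let R be a commutative Noetherian local ring and M a nonzero finitely generated R-module with Supp_R(M) = Spec(R). If depth_{R_p}(M_p) ≤ depth(R_p) for all prime ideals p of R, then for every prime p of R, each M_p-regular sequence is R_p-regular. -/
open RingTheory.Sequence IsLocalRing CategoryTheory CategoryTheory.Limits
open scoped TensorProduct

/-- The `I`-depth of the module `M`: the supremum of the lengths of
(weakly) regular sequences on `M` consisting of elements of `I`.
(When `IM ≠ M` this is the common length of maximal `M`-regular sequences in `I`;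
when `IM = M`, in particular when `M = 0`, it is `∞`, matching the usual convention.) -/
noncomputable def rdepth {R : Type*} [CommRing R] (I : Ideal R)
    (M : Type*) [AddCommGroup M] [Module R M] : ℕ∞ :=
  sSup {n : ℕ∞ | ∃ rs : List R, (rs.length : ℕ∞) = n ∧ (∀ r ∈ rs, r ∈ I) ∧
    RingTheory.Sequence.IsWeaklyRegular M rs}

universe u

open Abelian in
lemma auxA {B : Type u} [CommRing B] [IsNoetherianRing B] [IsLocalRing B] (n : ℕ)
    (L : Type u) [AddCommGroup L] [Module B L] [Module.Finite B L] [Nontrivial L]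
    (x : B) (hx : x ∈ maximalIdeal B) (hreg : IsSMulRegular L x)
    (ys : List B) (hlen : ys.length = n + 1) (hys : ∀ r ∈ ys, r ∈ maximalIdeal B)
    (hy : IsWeaklyRegular L ys) :
    ∃ zs : List B, zs.length = n ∧ (∀ r ∈ zs, r ∈ maximalIdeal B) ∧
      IsWeaklyRegular (QuotSMulTop x L) zs := by
  have lt (L : Type u) [AddCommGroup L] [Module B L] [Module.Finite B L] [Nontrivial L] :
      maximalIdeal B • (⊤ : Submodule B L) < ⊤ :=
    (Submodule.top_ne_ideal_smul_of_le_jacobson_annihilator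
      (IsLocalRing.maximalIdeal_le_jacobson _)).symm.lt_top
  have e0 := (ModuleCat.exists_isRegular_tfae (maximalIdeal B) (n + 1)
    (ModuleCat.of B L) (lt L)).out 3 1
  have e := e0.mp
    ⟨ys, hlen, hys, IsRegular.of_isWeaklyRegular_of_mem_maximalIdeal _ hys hy⟩
  have := nontrivial_quotSMulTop_of_mem_maximalIdeal (L := L) hx
  obtain ⟨zs, h1, h2, h3⟩ := ((ModuleCat.exists_isRegular_tfae (maximalIdeal B) n
    (ModuleCat.of B (QuotSMulTop x L)) (lt (QuotSMulTop x L))).out 1 3).mp (by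
      intro i hi
      have zero1 := AddCommGrpCat.isZero_of_iff_subsingleton.mpr (e i (by omega))
      have zero2 := AddCommGrpCat.isZero_of_iff_subsingleton.mpr (e (i + 1) (by omega))
      exact AddCommGrpCat.subsingleton_of_isZero <| ShortComplex.Exact.isZero_of_both_zeros
        ((Ext.covariant_sequence_exact₃' _
          (IsSMulRegular.smulShortComplex_shortExact (M := ModuleCat.of B L) hreg)) i (i + 1) rfl)
        (zero1.eq_zero_of_src _) (zero2.eq_zero_of_tgt _))
  exact ⟨zs, h1, h2, h3.toIsWeaklyRegular⟩

lemma auxB {B : Type u} [CommRing B] [IsNoetherianRing B] [IsLocalRing B] (xs : List B) :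
    ∀ (L : Type u) [AddCommGroup L] [Module B L] [Module.Finite B L] [Nontrivial L]
    (_ : ∀ r ∈ xs, r ∈ maximalIdeal B) (_ : IsWeaklyRegular L xs)
    (ys : List B) (_ : xs.length < ys.length) (_ : ∀ r ∈ ys, r ∈ maximalIdeal B)
    (_ : IsWeaklyRegular L ys),
    ∃ z ∈ maximalIdeal B, IsSMulRegular (L ⧸ (Ideal.ofList xs • ⊤ : Submodule B L)) z := by
  induction xs with
  | nil =>
    intro L _ _ _ _ _ _ ys hl hys hy
    match ys with
    | [] => simp at hl
    | y :: ys =>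
      refine ⟨y, hys y (by simp), ?_⟩
      have := hy.regular_mod_prev 0 (by simp)
      exact this
  | cons x xs ih =>
    intro L _ _ _ _ hxs hx ys hl hys hy
    rw [isWeaklyRegular_cons_iff] at hx
    obtain ⟨m, hm⟩ : ∃ m, ys.length = m + 1 := ⟨ys.length - 1, by simp at hl; omega⟩
    obtain ⟨zs, h1, h2, h3⟩ := auxA m L x (hxs x (by simp)) hx.1 ys hm hys hy
    have := nontrivial_quotSMulTop_of_mem_maximalIdeal (L := L) (hxs x (by simp))
    obtain ⟨z, hz, hz'⟩ := ih (QuotSMulTop x L) (fun r hr => hxs r (by simp [hr])) hx.2 zs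
      (by simp at hl; omega) h2 h3
    exact ⟨z, hz, ((Submodule.quotOfListConsSMulTopEquivQuotSMulTopInner L x xs).isSMulRegular_congr z).mpr hz'⟩

lemma aux_step {R : Type*} [CommRing R] [IsNoetherianRing R]
    (M : Type*) [AddCommGroup M] [Module R M]
    (h : ∀ p : PrimeSpectrum R,
      rdepth (maximalIdeal (Localization.AtPrime p.asIdeal))
          (LocalizedModule p.asIdeal.primeCompl M) ≤
        rdepth (maximalIdeal (Localization.AtPrime p.asIdeal))
          (Localization.AtPrime p.asIdeal))
    (p : PrimeSpectrum R) (xs : List (Localization.AtPrime p.asIdeal))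
    (x : Localization.AtPrime p.asIdeal)
    (hxs : IsWeaklyRegular (Localization.AtPrime p.asIdeal) xs)
    (hw : IsWeaklyRegular (LocalizedModule p.asIdeal.primeCompl M) (xs ++ [x])) :
    IsWeaklyRegular (Localization.AtPrime p.asIdeal) (xs ++ [x]) := by
  rw [isWeaklyRegular_append_iff]
  refine ⟨hxs, (isWeaklyRegular_singleton_iff _ _).mpr ?_⟩
  by_contra hx
  let A := Localization.AtPrime p.asIdeal
  have : IsNoetherianRing A :=
    IsLocalization.isNoetherianRing p.asIdeal.primeCompl A inferInstance
  have hx' : x ∈ ⋃ q ∈ associatedPrimes A (A ⧸ (Ideal.ofList xs • ⊤ : Submodule A A)),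
      (q : Set A) := by
    rw [biUnion_associatedPrimes_eq_compl_regular]
    exact hx
  simp only [Set.mem_iUnion] at hx'
  obtain ⟨q, hq, hxq⟩ := hx'
  obtain ⟨hqp, y, hy⟩ := isAssociatedPrime_iff.mp (AssociatedPrimes.mem_iff.mp hq)
  obtain ⟨y, rfl⟩ := Submodule.Quotient.mk_surjective _ y
  have hqy : ∀ a : A, a ∈ q ↔ a * y ∈ Ideal.ofList xs := by
    intro a
    rw [hy, Submodule.mem_colon_singleton, Submodule.mem_bot, ← Submodule.Quotient.mk_smul,
      Submodule.Quotient.mk_eq_zero]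
    simp
  have hxsq : ∀ r ∈ xs ++ [x], r ∈ q := by
    intro r hr
    rw [List.mem_append, List.mem_singleton] at hr
    rcases hr with hr | rfl
    · exact (hqy r).mpr (Ideal.mul_mem_right _ _ (Ideal.subset_span hr))
    · exact hxq
  let q' : PrimeSpectrum R := ⟨q.comap (algebraMap R A), inferInstance⟩
  have hle : p.asIdeal.primeCompl ≤ q'.asIdeal.primeCompl := by
    intro s hs hsq
    exact hqp.ne_top (Ideal.eq_top_of_isUnit_mem _ hsq (IsLocalization.map_units A ⟨s, hs⟩))
  let B := Localization.AtPrime q'.asIdeal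
  have : IsNoetherianRing B :=
    IsLocalization.isNoetherianRing q'.asIdeal.primeCompl B inferInstance
  let _ : Algebra A B := IsLocalization.localizationAlgebraOfSubmonoidLe A B
    p.asIdeal.primeCompl q'.asIdeal.primeCompl hle
  have : IsScalarTower R A B := IsLocalization.localization_isScalarTower_of_submonoid_le A B
    p.asIdeal.primeCompl q'.asIdeal.primeCompl hle
  have hloc : IsLocalization (q'.asIdeal.primeCompl.map (algebraMap R A)) B :=
    IsLocalization.isLocalization_of_submonoid_le A B
      p.asIdeal.primeCompl q'.asIdeal.primeCompl hle
  have : Module.Flat A B := IsLocalization.flat B (q'.asIdeal.primeCompl.map (algebraMap R A))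
  let N := LocalizedModule q'.asIdeal.primeCompl M
  let _ : Module A N := Module.compHom N (algebraMap A B)
  have : IsScalarTower A B N := IsScalarTower.of_algebraMap_smul fun _ _ => rfl
  have : IsScalarTower R A N := IsScalarTower.of_algebraMap_smul fun r n => by
    change algebraMap A B (algebraMap R A r) • n = r • n
    rw [← IsScalarTower.algebraMap_apply, algebraMap_smul]
  have bc1 : IsBaseChange A (LocalizedModule.mkLinearMap p.asIdeal.primeCompl M) :=
    (isLocalizedModule_iff_isBaseChange p.asIdeal.primeCompl A _).mp inferInstance
  have bc2 : IsBaseChange B (LocalizedModule.mkLinearMap q'.asIdeal.primeCompl M) :=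
    (isLocalizedModule_iff_isBaseChange q'.asIdeal.primeCompl B _).mp inferInstance
  have bc3 : IsBaseChange B (bc1.lift (LocalizedModule.mkLinearMap q'.asIdeal.primeCompl M)) := by
    apply IsBaseChange.of_comp bc1
    rw [IsBaseChange.lift_comp]
    exact bc2
  have hwB := IsWeaklyRegular.of_flat_of_isBaseChange bc3 hw
  have hxsB := IsWeaklyRegular.of_flat (S := B) hxs
  have hqB : ∀ a ∈ q, algebraMap A B a ∈ maximalIdeal B := by
    intro a ha
    obtain ⟨⟨r, s⟩, hrs⟩ := IsLocalization.surj p.asIdeal.primeCompl a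
    have h1 : r ∈ q'.asIdeal := by
      change algebraMap R A r ∈ q
      rw [← hrs]
      exact Ideal.mul_mem_right _ _ ha
    have h2 : algebraMap R B r ∈ maximalIdeal B := by
      rw [← Localization.AtPrime.map_eq_maximalIdeal]
      exact Ideal.mem_map_of_mem _ h1
    rw [IsScalarTower.algebraMap_apply R A B, ← hrs, map_mul] at h2
    have hu : IsUnit (algebraMap A B (algebraMap R A s)) :=
      (IsLocalization.map_units A s).map (algebraMap A B)
    exact ((Ideal.IsPrime.mem_or_mem inferInstance h2).resolve_right
      fun h3 => (IsLocalRing.mem_maximalIdeal _).mp h3 hu)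
  have hBq : maximalIdeal B ≤ q.map (algebraMap A B) := by
    rw [← Localization.AtPrime.map_eq_maximalIdeal, IsScalarTower.algebraMap_eq R A B,
      ← Ideal.map_map]
    exact Ideal.map_mono Ideal.map_comap_le
  have hmemB : ∀ l : List A, (∀ r ∈ l, r ∈ q) →
      ∀ r ∈ l.map (algebraMap A B), r ∈ maximalIdeal B := by
    intro l hl r hr
    obtain ⟨a, ha, rfl⟩ := List.mem_map.mp hr
    exact hqB a (hl a ha)
  have hd : ((xs.length + 1 : ℕ) : ℕ∞) ≤ rdepth (maximalIdeal B) N :=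
    le_sSup ⟨_, by simp, hmemB _ hxsq, hwB⟩
  have hd2 : (xs.length : ℕ∞) < rdepth (maximalIdeal B) B :=
    lt_of_lt_of_le (by exact_mod_cast Nat.lt_succ_self _) (hd.trans (h q'))
  obtain ⟨_, ⟨ys, rfl, hys, hyw⟩, hlt⟩ := lt_sSup_iff.mp hd2
  obtain ⟨z, hz, hzr⟩ := auxB (xs.map (algebraMap A B)) B
    (hmemB _ fun r hr => hxsq r (by simp [hr])) hxsB ys (by simpa using hlt) hys hyw
  have hof : Ideal.ofList (xs.map (algebraMap A B)) = (Ideal.ofList xs).map (algebraMap A B) :=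
    (Ideal.map_ofList _ _).symm
  have hzy : z * algebraMap A B y ∈ (Ideal.ofList xs).map (algebraMap A B) := by
    have h1 := Ideal.mul_mem_mul (hBq hz)
      (Ideal.mem_map_of_mem (algebraMap A B) (Ideal.mem_span_singleton_self y))
    rw [← Ideal.map_mul] at h1
    refine Ideal.map_mono ?_ h1
    rw [Ideal.mul_le]
    intro a ha b hb
    obtain ⟨c, rfl⟩ := Ideal.mem_span_singleton'.mp hb
    rw [mul_left_comm]
    exact Ideal.mul_mem_left _ _ ((hqy a).mp ha)
  have hy0 : algebraMap A B y ∈ (Ideal.ofList xs).map (algebraMap A B) := by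
    have h1 := @hzr (Submodule.Quotient.mk (algebraMap A B y)) 0 (by
      simp only [smul_zero]
      rw [← Submodule.Quotient.mk_smul, Submodule.Quotient.mk_eq_zero]
      rwa [smul_eq_mul, hof, smul_eq_mul, Ideal.mul_top])
    rw [Submodule.Quotient.mk_eq_zero] at h1
    rwa [hof, smul_eq_mul, Ideal.mul_top] at h1
  obtain ⟨s, hs, hsy⟩ := (IsLocalization.algebraMap_mem_map_algebraMap_iff
    (q'.asIdeal.primeCompl.map (algebraMap R A)) B _ _).mp hy0
  obtain ⟨t, ht, rfl⟩ := hs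
  exact ht ((hqy _).mpr hsy)

/-- If `M` has full support and `depth_{R_p}(M_p) ≤ depth(R_p)` for all primes `p`,
then for every prime `p` each `M_p`-regular sequence is `R_p`-regular. -/
theorem stmt3 {R : Type*} [CommRing R] [IsNoetherianRing R] [IsLocalRing R]
    (M : Type*) [AddCommGroup M] [Module R M] [Module.Finite R M] [Nontrivial M]
    (hsupp : Module.support R M = Set.univ)
    (h : ∀ p : PrimeSpectrum R,
      rdepth (maximalIdeal (Localization.AtPrime p.asIdeal))
          (LocalizedModule p.asIdeal.primeCompl M) ≤
        rdepth (maximalIdeal (Localization.AtPrime p.asIdeal))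
          (Localization.AtPrime p.asIdeal)) :
    ∀ p : PrimeSpectrum R, ∀ rs : List (Localization.AtPrime p.asIdeal),
      RingTheory.Sequence.IsRegular (LocalizedModule p.asIdeal.primeCompl M) rs →
        RingTheory.Sequence.IsRegular (Localization.AtPrime p.asIdeal) rs := by
  intro p rs hrs
  have hmax : ∀ r ∈ rs, r ∈ maximalIdeal (Localization.AtPrime p.asIdeal) := by
    intro r hr
    rw [IsLocalRing.mem_maximalIdeal, mem_nonunits_iff]
    intro hu
    apply hrs.top_ne_smul
    have : Ideal.ofList rs = ⊤ := Ideal.eq_top_of_isUnit_mem _ (Ideal.subset_span hr) hu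
    rw [this, Submodule.top_smul]
  refine IsRegular.of_isWeaklyRegular_of_mem_maximalIdeal _ hmax ?_
  have hw := hrs.toIsWeaklyRegular
  clear hrs hmax
  induction rs using List.reverseRecOn with
  | nil => exact IsWeaklyRegular.nil _ _
  | append_singleton xs x ih =>
    have hxs := ih ((isWeaklyRegular_append_iff _ _ _).mp hw).1
    exact aux_step M h p xs x hxs hw
end

section
/- Let R = k[[x,y,z]]/(xy) and M = R/(x^2). Then M is not Tor-rigid: with N = R/(y) one has Tor_1^R(M, N) = 0 but Tor_2^R(M, N) ≠ 0. -/
open RingTheory.Sequence IsLocalRing CategoryTheory CategoryTheory.Limits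
open scoped TensorProduct

namespace TorAux

universe u

variable {R : Type u} [CommRing R] (x y : R)

/-- multiplication by `x` on `R`, as a morphism -/
noncomputable def mulHom : ModuleCat.of R R ⟶ ModuleCat.of R R :=
  ModuleCat.ofHom (LinearMap.lsmul R R x)

lemma mulHom_apply (a : R) : (mulHom x).hom a = x * a := rfl

lemma mulHom_comp (h : x * y = 0) : mulHom x ≫ mulHom y = 0 := by
  apply ModuleCat.hom_ext
  apply LinearMap.ext
  intro a
  change y * (x * a) = 0
  rw [← mul_assoc, mul_comm y x, h, zero_mul]

/-- The periodic complex. -/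
noncomputable def cplx (h : x * y = 0) : ChainComplex (ModuleCat.{u} R) ℕ :=
  HomologicalComplex.alternatingConst (ModuleCat.of R R) (φ := mulHom x) (ψ := mulHom y)
    (mulHom_comp x y h) (mulHom_comp y x (by rw [mul_comm, h]))
    fun _ _ => ComplexShape.down_nat_odd_add

lemma cplx_d_even (h : x * y = 0) (n : ℕ) (hn : Even (n + 1)) :
    (cplx x y h).d (n + 1) n = mulHom x := by
  change (if hij : (ComplexShape.down ℕ).Rel (n + 1) n then
      if hi : Even (n + 1) then mulHom x else mulHom y else 0) = _
  rw [dif_pos (by simp), dif_pos hn]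

lemma cplx_d_odd (h : x * y = 0) (n : ℕ) (hn : ¬ Even (n + 1)) :
    (cplx x y h).d (n + 1) n = mulHom y := by
  change (if hij : (ComplexShape.down ℕ).Rel (n + 1) n then
      if hi : Even (n + 1) then mulHom x else mulHom y else 0) = _
  rw [dif_pos (by simp), dif_neg hn]

/-- the augmentation -/
noncomputable def aug : ModuleCat.of R R ⟶ ModuleCat.of R (R ⧸ Ideal.span {y}) :=
  ModuleCat.ofHom (Submodule.mkQ (Ideal.span {y}))

lemma mulHom_aug : mulHom y ≫ aug y = 0 := by
  apply ModuleCat.hom_ext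
  apply LinearMap.ext
  intro (a : R)
  change (Submodule.Quotient.mk (y * a) : R ⧸ Ideal.span {y}) = 0
  rw [Submodule.Quotient.mk_eq_zero]
  exact Ideal.mul_mem_right _ _ (Ideal.mem_span_singleton_self y)

lemma d_aug (h : x * y = 0) : (cplx x y h).d 1 0 ≫ aug y = 0 := by
  rw [cplx_d_odd x y h 0 (by decide)]
  exact mulHom_aug y

/-- the augmentation as a chain map -/
noncomputable def augC (h : x * y = 0) : cplx x y h ⟶
    (ChainComplex.single₀ (ModuleCat.{u} R)).obj (ModuleCat.of R (R ⧸ Ideal.span {y})) :=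
  ((cplx x y h).toSingle₀Equiv _).symm ⟨aug y, d_aug x y h⟩

lemma augC_f (h : x * y = 0) : (augC x y h).f 0 = aug y := by
  exact ChainComplex.toSingle₀Equiv_symm_apply_f_zero (C := cplx x y h) (aug y) (d_aug x y h)

lemma exact_sc {V : Type*} [Category V] [HasZeroMorphisms V] {A B C : V} {f f' : A ⟶ B} {g g' : B ⟶ C} (w : f ≫ g = 0)
    (hf : f = f') (hg : g = g') (w' : f' ≫ g' = 0) :
    (ShortComplex.mk f g w).Exact ↔ (ShortComplex.mk f' g' w').Exact := by
  subst hf hg; rfl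

lemma quasi (h : x * y = 0) (hx : ∀ a, x * a = 0 → ∃ b, y * b = a)
    (hy : ∀ a, y * a = 0 → ∃ b, x * b = a) : QuasiIso (augC x y h) where
  quasiIsoAt m := by
    cases m with
    | zero =>
      rw [ChainComplex.quasiIsoAt₀_iff, ShortComplex.quasiIso_iff_of_zeros' _ rfl rfl rfl]
      constructor
      · refine (exact_sc (A := ModuleCat.of R R) (B := ModuleCat.of R R)
          (C := ModuleCat.of R (R ⧸ Ideal.span {y})) (f' := mulHom y) (g' := aug y) _
          (cplx_d_odd x y h 0 (by decide)) (augC_f x y h) ?_).2 ?_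
        · exact mulHom_aug y
        · rw [ShortComplex.moduleCat_exact_iff]
          intro (a : R) ha
          have ha' : (Submodule.Quotient.mk a : R ⧸ Ideal.span {y}) = 0 := ha
          rw [Submodule.Quotient.mk_eq_zero, Ideal.mem_span_singleton'] at ha'
          obtain ⟨b, hb⟩ := ha'
          exact ⟨b, (mul_comm _ _).trans hb⟩
      · change Epi ((augC x y h).f 0)
        rw [augC_f]
        change Epi (aug y)
        rw [ModuleCat.epi_iff_surjective]
        exact Submodule.mkQ_surjective _
    | succ m =>
      rw [quasiIsoAt_iff_exactAt' (hL := ChainComplex.exactAt_succ_single_obj ..),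
          HomologicalComplex.exactAt_iff' _ (m + 2) (m + 1) m (by simp) (by simp)]
      by_cases hm : Even (m + 1)
      · refine (exact_sc _ (cplx_d_odd x y h (m + 1) (by rw [Nat.even_add_one]; simpa using hm))
          (cplx_d_even x y h m hm) (mulHom_comp y x (by rw [mul_comm, h]))).2 ?_
        rw [ShortComplex.moduleCat_exact_iff]
        exact hx
      · refine (exact_sc _ (cplx_d_even x y h (m + 1) (by rw [Nat.even_add_one]; exact hm))
          (cplx_d_odd x y h m hm) (mulHom_comp x y h)).2 ?_
        rw [ShortComplex.moduleCat_exact_iff]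
        exact hy

/-- the resolution -/
noncomputable def resol (h : x * y = 0) (hx : ∀ a, x * a = 0 → ∃ b, y * b = a)
    (hy : ∀ a, y * a = 0 → ∃ b, x * b = a) :
    ProjectiveResolution (ModuleCat.of R (R ⧸ Ideal.span {y})) where
  complex := cplx x y h
  projective _ := inferInstanceAs <| Projective (ModuleCat.of R R)
  π := augC x y h
  quasiIso := quasi x y h hx hy

open MonoidalCategory

lemma whisker_rid (M : Type u) [AddCommGroup M] [Module R M] (t : M ⊗[R] R) :
    TensorProduct.rid R M ((ModuleCat.of R M ◁ mulHom x).hom t) = x • TensorProduct.rid R M t := by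
  induction t using TensorProduct.induction_on with
  | zero => simp
  | add a b ha hb =>
    rw [map_add, map_add, ha, hb, map_add, smul_add]
  | tmul m r =>
    change TensorProduct.rid R M (m ⊗ₜ (x * r)) = _
    simp [mul_smul]

lemma exact_whisker (M : Type u) [AddCommGroup M] [Module R M]
    (w : (ModuleCat.of R M ◁ mulHom x) ≫ (ModuleCat.of R M ◁ mulHom y) = 0) :
    (ShortComplex.mk _ _ w).Exact ↔ ∀ m : M, y • m = 0 → ∃ m', x • m' = m := by
  rw [ShortComplex.moduleCat_exact_iff]
  constructor
  · intro H m hm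
    obtain ⟨t, ht⟩ := H ((TensorProduct.rid R M).symm m) (by
      apply (TensorProduct.rid R M).injective
      refine (whisker_rid y M _).trans ?_
      rw [LinearEquiv.apply_symm_apply, hm, map_zero])
    refine ⟨TensorProduct.rid R M t, ?_⟩
    rw [← whisker_rid]
    exact (congrArg (TensorProduct.rid R M) ht).trans (LinearEquiv.apply_symm_apply _ _)
  · intro H t ht
    obtain ⟨m, hm⟩ := H (TensorProduct.rid R M t) (by
      rw [← whisker_rid]
      exact (congrArg (TensorProduct.rid R M) ht).trans (map_zero _))
    refine ⟨(TensorProduct.rid R M).symm m, ?_⟩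
    apply (TensorProduct.rid R M).injective
    refine (whisker_rid x M _).trans ?_
    rw [LinearEquiv.apply_symm_apply, hm]

lemma whisker_comp (h : x * y = 0) (M : Type u) [AddCommGroup M] [Module R M] :
    (ModuleCat.of R M ◁ mulHom x) ≫ (ModuleCat.of R M ◁ mulHom y) = 0 := by
  rw [← MonoidalCategory.whiskerLeft_comp, mulHom_comp x y h, MonoidalPreadditive.whiskerLeft_zero]

lemma tor_iff (h : x * y = 0) (hx : ∀ a, x * a = 0 → ∃ b, y * b = a)
    (hy : ∀ a, y * a = 0 → ∃ b, x * b = a) (M : Type u) [AddCommGroup M] [Module R M] (n : ℕ) :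
    IsZero (((Tor (ModuleCat.{u} R) (n + 1)).obj (ModuleCat.of R M)).obj
      (ModuleCat.of R (R ⧸ Ideal.span {y}))) ↔
    (ShortComplex.mk (ModuleCat.of R M ◁ (cplx x y h).d (n + 2) (n + 1))
      (ModuleCat.of R M ◁ (cplx x y h).d (n + 1) n)
      (by rw [← MonoidalCategory.whiskerLeft_comp, HomologicalComplex.d_comp_d,
        MonoidalPreadditive.whiskerLeft_zero])).Exact := by
  refine ((resol x y h hx hy).isoLeftDerivedObj
    ((tensoringLeft (ModuleCat.{u} R)).obj (ModuleCat.of R M)) (n + 1)).isZero_iff.trans ?_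
  refine (HomologicalComplex.exactAt_iff_isZero_homology _ _).symm.trans ?_
  rw [HomologicalComplex.exactAt_iff' _ (n + 2) (n + 1) n (by simp) (by simp)]
  rfl

lemma tor1_iff (h : x * y = 0) (hx : ∀ a, x * a = 0 → ∃ b, y * b = a)
    (hy : ∀ a, y * a = 0 → ∃ b, x * b = a) (M : Type u) [AddCommGroup M] [Module R M] :
    IsZero (((Tor (ModuleCat.{u} R) 1).obj (ModuleCat.of R M)).obj
      (ModuleCat.of R (R ⧸ Ideal.span {y}))) ↔ ∀ m : M, y • m = 0 → ∃ m', x • m' = m := by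
  rw [tor_iff x y h hx hy M 0, ← exact_whisker x y M (whisker_comp x y h M)]
  exact exact_sc _ (congrArg _ (cplx_d_even x y h 1 (by decide)))
    (congrArg _ (cplx_d_odd x y h 0 (by decide))) _

lemma tor2_iff (h : x * y = 0) (hx : ∀ a, x * a = 0 → ∃ b, y * b = a)
    (hy : ∀ a, y * a = 0 → ∃ b, x * b = a) (M : Type u) [AddCommGroup M] [Module R M] :
    IsZero (((Tor (ModuleCat.{u} R) 2).obj (ModuleCat.of R M)).obj
      (ModuleCat.of R (R ⧸ Ideal.span {y}))) ↔ ∀ m : M, x • m = 0 → ∃ m', y • m' = m := by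
  have h' : y * x = 0 := by rw [mul_comm, h]
  rw [tor_iff x y h hx hy M 1, ← exact_whisker y x M (whisker_comp y x h' M)]
  exact exact_sc _ (congrArg _ (cplx_d_odd x y h 2 (by decide)))
    (congrArg _ (cplx_d_even x y h 1 (by decide))) _

section PS

variable {k : Type} [Field k]

lemma X1_cancel (a : MvPowerSeries (Fin 3) k) (h : (MvPowerSeries.X 1 : MvPowerSeries (Fin 3) k) ∣ MvPowerSeries.X 0 * a) :
    (MvPowerSeries.X 1 : MvPowerSeries (Fin 3) k) ∣ a := by
  rw [MvPowerSeries.X_dvd_iff] at h ⊢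
  intro m hm
  have := h (Finsupp.single 0 1 + m) (by simp [hm])
  rwa [MvPowerSeries.X, MvPowerSeries.coeff_add_monomial_mul, one_mul] at this

lemma X0_cancel (a : MvPowerSeries (Fin 3) k) (h : (MvPowerSeries.X 0 : MvPowerSeries (Fin 3) k) ∣ MvPowerSeries.X 1 * a) :
    (MvPowerSeries.X 0 : MvPowerSeries (Fin 3) k) ∣ a := by
  rw [MvPowerSeries.X_dvd_iff] at h ⊢
  intro m hm
  have := h (Finsupp.single 1 1 + m) (by simp [hm])
  rwa [MvPowerSeries.X, MvPowerSeries.coeff_add_monomial_mul, one_mul] at this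

lemma X_ne (i : Fin 3) : (MvPowerSeries.X i : MvPowerSeries (Fin 3) k) ≠ 0 := by
  intro h
  have := congrArg (MvPowerSeries.coeff (Finsupp.single i 1)) h
  simp [MvPowerSeries.coeff_index_single_self_X] at this

lemma not_mem (b c d : MvPowerSeries (Fin 3) k) :
    (MvPowerSeries.X 0 : MvPowerSeries (Fin 3) k) ≠ MvPowerSeries.X 1 * b + MvPowerSeries.X 0 ^ 2 * c
      + MvPowerSeries.X 0 * MvPowerSeries.X 1 * d := by
  intro h
  have h1 : (MvPowerSeries.X 1 : MvPowerSeries (Fin 3) k) ∣ MvPowerSeries.X 0 * (1 - MvPowerSeries.X 0 * c) :=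
    ⟨b + MvPowerSeries.X 0 * d, by linear_combination h⟩
  obtain ⟨e, he⟩ := X1_cancel _ h1
  have := congrArg MvPowerSeries.constantCoeff he
  simp at this

end PS

end TorAux

/-- In `R = k[[x,y,z]]/(xy)`, the module `M = R/(x²)` is not Tor-rigid:
for `N = R/(y)` one has `Tor₁(M,N) = 0` but `Tor₂(M,N) ≠ 0`. -/
theorem stmt7 {k : Type} [Field k]
    (x y :
      MvPowerSeries (Fin 3) k ⧸
        Ideal.span {(MvPowerSeries.X 0 * MvPowerSeries.X 1 : MvPowerSeries (Fin 3) k)})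
    (hx : x = Ideal.Quotient.mk _ (MvPowerSeries.X 0))
    (hy : y = Ideal.Quotient.mk _ (MvPowerSeries.X 1)) :
    IsZero
      (((Tor (ModuleCat
          (MvPowerSeries (Fin 3) k ⧸
            Ideal.span {(MvPowerSeries.X 0 * MvPowerSeries.X 1 : MvPowerSeries (Fin 3) k)})) 1).obj
        (ModuleCat.of _ (_ ⧸ (Ideal.span {x ^ 2})))).obj
        (ModuleCat.of _ (_ ⧸ (Ideal.span {y})))) ∧
    ¬ IsZero
      (((Tor (ModuleCat
          (MvPowerSeries (Fin 3) k ⧸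
            Ideal.span {(MvPowerSeries.X 0 * MvPowerSeries.X 1 : MvPowerSeries (Fin 3) k)})) 2).obj
        (ModuleCat.of _ (_ ⧸ (Ideal.span {x ^ 2})))).obj
        (ModuleCat.of _ (_ ⧸ (Ideal.span {y})))) := by
  have key : ∀ a : MvPowerSeries (Fin 3) k, Ideal.Quotient.mk (Ideal.span
      {(MvPowerSeries.X 0 * MvPowerSeries.X 1 : MvPowerSeries (Fin 3) k)}) a = 0 ↔
      ∃ d, a = MvPowerSeries.X 0 * MvPowerSeries.X 1 * d := by
    intro a
    rw [Ideal.Quotient.eq_zero_iff_mem, Ideal.mem_span_singleton]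
    rfl
  have h0 := TorAux.X_ne (k := k) 0
  have h1 := TorAux.X_ne (k := k) 1
  have hxy : x * y = 0 := by
    rw [hx, hy, ← map_mul, key]
    exact ⟨1, (mul_one _).symm⟩
  have ex : ∀ a, x * a = 0 → ∃ b, y * b = a := by
    intro a ha
    obtain ⟨a, rfl⟩ := Ideal.Quotient.mk_surjective a
    rw [hx, ← map_mul, key] at ha
    obtain ⟨d, hd⟩ := ha
    refine ⟨Ideal.Quotient.mk _ d, ?_⟩
    rw [hy, ← map_mul]
    congr 1
    apply mul_left_cancel₀ h0
    linear_combination -hd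
  have ey : ∀ a, y * a = 0 → ∃ b, x * b = a := by
    intro a ha
    obtain ⟨a, rfl⟩ := Ideal.Quotient.mk_surjective a
    rw [hy, ← map_mul, key] at ha
    obtain ⟨d, hd⟩ := ha
    refine ⟨Ideal.Quotient.mk _ d, ?_⟩
    rw [hx, ← map_mul]
    congr 1
    apply mul_left_cancel₀ h1
    linear_combination -hd
  rw [TorAux.tor1_iff x y hxy ex ey, TorAux.tor2_iff x y hxy ex ey]
  constructor
  · intro m hm
    obtain ⟨m, rfl⟩ := Ideal.Quotient.mk_surjective m
    have hm' : Ideal.Quotient.mk (Ideal.span {x ^ 2}) (y * m) = 0 := hm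
    rw [Ideal.Quotient.eq_zero_iff_mem, Ideal.mem_span_singleton] at hm'
    obtain ⟨c, hc⟩ := hm'
    obtain ⟨a, rfl⟩ := Ideal.Quotient.mk_surjective m
    obtain ⟨c, rfl⟩ := Ideal.Quotient.mk_surjective c
    rw [hx, hy, ← map_mul, ← map_pow, ← map_mul, ← sub_eq_zero, ← map_sub, key] at hc
    obtain ⟨d, hd⟩ := hc
    obtain ⟨e, rfl⟩ := TorAux.X0_cancel a ⟨MvPowerSeries.X 0 * c + MvPowerSeries.X 1 * d, by
      linear_combination hd⟩
    refine ⟨Ideal.Quotient.mk _ (Ideal.Quotient.mk _ e), ?_⟩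
    rw [map_mul, ← hx]
    rfl
  · intro H
    obtain ⟨m, hm⟩ := H (Ideal.Quotient.mk _ x) (by
      change Ideal.Quotient.mk (Ideal.span {x ^ 2}) (x * x) = 0
      rw [Ideal.Quotient.eq_zero_iff_mem, ← pow_two]
      exact Ideal.mem_span_singleton_self _)
    obtain ⟨m, rfl⟩ := Ideal.Quotient.mk_surjective m
    have hm' : Ideal.Quotient.mk (Ideal.span {x ^ 2}) (y * m) = Ideal.Quotient.mk _ x := hm
    rw [eq_comm, Ideal.Quotient.eq, Ideal.mem_span_singleton] at hm'
    obtain ⟨c, hc⟩ := hm'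
    obtain ⟨b, rfl⟩ := Ideal.Quotient.mk_surjective m
    obtain ⟨c, rfl⟩ := Ideal.Quotient.mk_surjective c
    rw [hx, hy, ← map_mul, ← map_sub, ← map_pow, ← map_mul, ← sub_eq_zero, ← map_sub, key] at hc
    obtain ⟨d, hd⟩ := hc
    exact TorAux.not_mem b c d (by linear_combination hd)
end

section
/- Let R be a commutative Noetherian local ring, M a finitely generated R-module, and p ⊆ q prime ideals of R. Then depth_{R_p}(M_p) ≥ depth_{R_q}(M_q) − dim(R_q / p R_q). -/
open RingTheory.Sequence IsLocalRing CategoryTheory CategoryTheory.Limits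
open scoped TensorProduct

universe u v

open Abelian in
lemma ischebeck_aux {S : Type u} [CommRing S] [IsNoetherianRing S] [IsLocalRing S] [Small.{v} S]
    (M : ModuleCat.{v} S) [Module.Finite S M] [Nontrivial M] (rs : List S)
    (mem : ∀ r ∈ rs, r ∈ maximalIdeal S) (reg : IsWeaklyRegular M rs) (d : ℕ) :
    ∀ (N : Type v) [AddCommGroup N] [Module S N] [Module.Finite S N],
      Module.supportDim S N < d → ∀ i, i + d ≤ rs.length →
      Subsingleton (Ext (ModuleCat.of S N) M i) := by
  have reg' : IsRegular M rs := RingTheory.Sequence.IsRegular.of_isWeaklyRegular_of_mem_maximalIdeal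
    M mem reg
  have smul_lt : maximalIdeal S • (⊤ : Submodule S M) < ⊤ :=
    (Submodule.top_ne_ideal_smul_of_le_jacobson_annihilator
      (maximalIdeal_le_jacobson _)).symm.lt_top
  have hsub : ∀ (N : Type v) [AddCommGroup N] [Module S N] [Subsingleton N] (i : ℕ),
      Subsingleton (Ext (ModuleCat.of S N) M i) := by
    intro N _ _ _ i
    refine ⟨fun a b => ?_⟩
    have h0 : 𝟙 (ModuleCat.of S N) = 0 := by
      ext x
      exact Subsingleton.elim _ _
    have hz : ∀ a : Ext (ModuleCat.of S N) M i, a = 0 := by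
      intro a
      rw [← Ext.mk₀_id_comp a, h0, Ext.mk₀_zero, Ext.zero_comp]
    rw [hz a, hz b]
  induction d with
  | zero =>
    intro N _ _ _ hN i hi
    rcases subsingleton_or_nontrivial N with h | h
    · exact hsub N i
    · exfalso
      have : Nonempty (Module.support S N) := Module.nonempty_support_of_nontrivial.to_subtype
      have h0 : 0 ≤ Module.supportDim S N := Order.krullDim_nonneg
      exact absurd hN (not_lt.mpr (by simpa using h0))
  | succ d ih =>
    intro N _ _ hfin
    induction hfin using IsNoetherianRing.induction_on_isQuotientEquivQuotientPrime S with
    | subsingleton N => exact fun _ i _ => hsub N i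
    | quotient N p e =>
      intro hN i hi
      by_cases hp : p.1 = maximalIdeal S
      · refine ModuleCat.subsingleton_ext_of_exists_isRegular (maximalIdeal S) (ModuleCat.of S N) ?_
          M smul_lt rs mem reg' i (by omega)
        rw [show Module.support S (ModuleCat.of S N) = Module.support S N from rfl,
          e.support_eq, Module.support_eq_zeroLocus, Ideal.annihilator_quotient, hp]
      · obtain ⟨x, hxm, hxp⟩ : ∃ x ∈ maximalIdeal S, x ∉ p.1 := by
          by_contra! hcon
          exact hp (le_antisymm (le_maximalIdeal p.2.ne_top) hcon)
        have hx : IsSMulRegular N x := by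
          rw [e.isSMulRegular_congr, isSMulRegular_quotient_iff_mem_of_smul_mem]
          intro y hy
          exact (p.2.mem_or_mem hy).resolve_left hxp
        have hdim : Module.supportDim S (QuotSMulTop x N) < d := by
          have := Module.supportDim_quotSMulTop_succ_eq_supportDim hx hxm
          rw [← this] at hN
          push_cast at hN
          exact lt_of_add_lt_add_right hN
        have h1 := ih (QuotSMulTop x N) hdim (1 + i) (by omega)
        have hx' : IsSMulRegular (ModuleCat.of S N) x := hx
        have hsurj : ∀ a : Ext (ModuleCat.of S N) M i, ∃ b : Ext (ModuleCat.of S N) M i, x • b = a := by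
          intro a
          obtain ⟨b, hb⟩ := Ext.contravariant_sequence_exact₁ hx'.smulShortComplex_shortExact M a rfl
            (@Subsingleton.elim _ h1 _ _)
          have hmul : ∀ b : Ext (ModuleCat.of S N) M i,
              x • b = (Ext.mk₀ (x • 𝟙 (ModuleCat.of S N))).comp b (zero_add i) := by
            intro b
            simp [Ext.mk₀_smul]
          exact ⟨b, (hmul b).trans hb⟩
        have hbot : (⊤ : Submodule S (Ext (ModuleCat.of S N) M i)) = ⊥ := by
          refine Submodule.eq_bot_of_le_smul_of_le_jacobson_bot (maximalIdeal S) ⊤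
            Module.Finite.fg_top ?_ (maximalIdeal_le_jacobson _)
          intro a _
          obtain ⟨b, rfl⟩ := hsurj a
          exact Submodule.smul_mem_smul hxm trivial
        exact (Submodule.subsingleton_iff S).mp (subsingleton_of_bot_eq_top hbot.symm)
    | exact N₁ N₂ N₃ f g hf hg hfg h₁ h₃ =>
      intro hN i hi
      have a1 := h₁ ((Module.supportDim_le_of_injective f hf).trans_lt hN) i hi
      have a3 := h₃ ((Module.supportDim_le_of_surjective g hg).trans_lt hN) i hi
      have hS : (ModuleCat.shortComplexOfCompEqZero f g hfg.linearMap_comp_eq_zero).ShortExact :=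
        { exact := ModuleCat.shortComplex_exact _ hfg
          mono_f := by
            rw [ModuleCat.mono_iff_injective]; exact hf
          epi_g := by
            rw [ModuleCat.epi_iff_surjective]; exact hg }
      have hz : ∀ a : Ext (ModuleCat.of S N₂) M i, a = 0 := by
        intro a
        obtain ⟨b, hb⟩ := Ext.contravariant_sequence_exact₂ hS M a (@Subsingleton.elim _ a1 _ _)
        rw [← hb, show b = 0 from @Subsingleton.elim _ a3 _ _, Ext.comp_zero]
      exact ⟨fun a b => by rw [hz a, hz b]⟩

lemma ischebeck {S : Type u} [CommRing S] [IsNoetherianRing S] [IsLocalRing S]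
    (M : Type v) [AddCommGroup M] [Module S M] [Module.Finite S M] (rs : List S)
    (mem : ∀ r ∈ rs, r ∈ maximalIdeal S) (reg : IsWeaklyRegular M rs) (d : ℕ)
    (I : Ideal S) (hI : I ≤ maximalIdeal S) (hd : ringKrullDim (S ⧸ I) ≤ d) :
    ∃ rs' : List S, rs'.length = rs.length - d ∧ (∀ r ∈ rs', r ∈ I) ∧ IsWeaklyRegular M rs' := by
  rcases le_or_gt rs.length d with hle | hlt
  · exact ⟨[], by simp; omega, by simp, .nil S M⟩
  rcases subsingleton_or_nontrivial M with hM | hM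
  · refine ⟨List.replicate (rs.length - d) 0, by simp, ?_, ?_⟩
    · intro r hr
      rw [List.eq_of_mem_replicate hr]
      exact I.zero_mem
    · rw [isWeaklyRegular_iff]
      intro i hi
      have : Subsingleton (M ⧸ (Ideal.ofList ((List.replicate (rs.length - d) (0 : S)).take i) • ⊤ : Submodule S M)) :=
        (Submodule.mkQ_surjective _).subsingleton
      exact fun a b _ => Subsingleton.elim _ _
  let M' := ModuleCat.of S (ULift.{u} M)
  have : Small.{max u v} S := small_max.{v, u} S
  have : Nontrivial M' := inferInstanceAs (Nontrivial (ULift.{u} M))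
  have : Module.Finite S M' := Module.Finite.equiv (ULift.moduleEquiv (R := S) (M := M)).symm
  have regU : IsWeaklyRegular M' rs :=
    ((ULift.moduleEquiv (R := S) (M := M)).isWeaklyRegular_congr rs).mpr reg
  have smul_lt : I • (⊤ : Submodule S M') < ⊤ :=
    (Submodule.top_ne_ideal_smul_of_le_jacobson_annihilator
      (hI.trans (maximalIdeal_le_jacobson _))).symm.lt_top
  have : Module.Finite S (Shrink.{max u v} (S ⧸ I)) :=
    Module.Finite.equiv (Shrink.linearEquiv S (S ⧸ I)).symm
  have key := (ModuleCat.exists_isRegular_tfae I (rs.length - d) M' smul_lt).out 1 3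
  obtain ⟨rs', h1, h2, h3⟩ := key.mp (by
    intro i hi
    refine ischebeck_aux M' rs mem regU (d + 1) (Shrink.{max u v} (S ⧸ I)) ?_ i (by omega)
    rw [Module.supportDim_eq_of_equiv (Shrink.linearEquiv S (S ⧸ I)),
      Module.supportDim_quotient_eq_ringKrullDim]
    refine hd.trans_lt ?_
    exact_mod_cast Nat.lt_succ_self d)
  exact ⟨rs', h1, h2,
    ((ULift.moduleEquiv (R := S) (M := M)).isWeaklyRegular_congr rs').mp h3.1⟩

lemma transfer_aux {R : Type u} [CommRing R]
    (M : Type v) [AddCommGroup M] [Module R M]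
    (p q : Ideal R) [p.IsPrime] [q.IsPrime] (hpq : p ≤ q)
    (rs : List (Localization.AtPrime q))
    (mem : ∀ r ∈ rs, r ∈ p.map (algebraMap R (Localization.AtPrime q)))
    (reg : IsWeaklyRegular (LocalizedModule q.primeCompl M) rs) :
    ∃ rs' : List (Localization.AtPrime p), rs'.length = rs.length ∧
      (∀ r ∈ rs', r ∈ maximalIdeal (Localization.AtPrime p)) ∧
      IsWeaklyRegular (LocalizedModule p.primeCompl M) rs' := by
  have hle : q.primeCompl ≤ p.primeCompl := fun x hx hxp => hx (hpq hxp)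
  let : Algebra (Localization.AtPrime q) (Localization.AtPrime p) :=
    IsLocalization.localizationAlgebraOfSubmonoidLe _ _ q.primeCompl p.primeCompl hle
  have : IsScalarTower R (Localization.AtPrime q) (Localization.AtPrime p) :=
    IsLocalization.localization_isScalarTower_of_submonoid_le _ _ q.primeCompl p.primeCompl hle
  have : IsLocalization (p.primeCompl.map (algebraMap R (Localization.AtPrime q)))
      (Localization.AtPrime p) :=
    IsLocalization.isLocalization_of_submonoid_le _ _ q.primeCompl p.primeCompl hle
  have : Module.Flat (Localization.AtPrime q) (Localization.AtPrime p) :=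
    IsLocalization.flat _ (p.primeCompl.map (algebraMap R (Localization.AtPrime q)))
  let : Module (Localization.AtPrime q) (LocalizedModule p.primeCompl M) :=
    .restrictScalars (Localization.AtPrime q) (Localization.AtPrime p) _
  have : IsScalarTower (Localization.AtPrime q) (Localization.AtPrime p)
      (LocalizedModule p.primeCompl M) :=
    .restrictScalars (Localization.AtPrime q) (Localization.AtPrime p) _
  have : IsScalarTower R (Localization.AtPrime q) (LocalizedModule p.primeCompl M) :=
    .of_algebraMap_smul fun r x => by
      rw [← algebraMap_smul (Localization.AtPrime p) (algebraMap R (Localization.AtPrime q) r) x,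
        ← IsScalarTower.algebraMap_apply, algebraMap_smul]
  have hq := IsLocalizedModule.isBaseChange q.primeCompl (Localization.AtPrime q)
    (LocalizedModule.mkLinearMap q.primeCompl M)
  have hp := IsLocalizedModule.isBaseChange p.primeCompl (Localization.AtPrime p)
    (LocalizedModule.mkLinearMap p.primeCompl M)
  have hc : ((hq.lift (LocalizedModule.mkLinearMap p.primeCompl M)).restrictScalars R) ∘ₗ
      LocalizedModule.mkLinearMap q.primeCompl M = LocalizedModule.mkLinearMap p.primeCompl M := by
    ext x
    exact hq.lift_eq _ x
  have hb := hq.of_comp (T := Localization.AtPrime p)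
    (h := hq.lift (LocalizedModule.mkLinearMap p.primeCompl M)) (by rw [hc]; exact hp)
  refine ⟨rs.map (algebraMap _ _), by simp, ?_, reg.of_flat_of_isBaseChange hb⟩
  intro r hr
  obtain ⟨s, hs, rfl⟩ := List.mem_map.mp hr
  have h2 := Ideal.mem_map_of_mem (algebraMap (Localization.AtPrime q) (Localization.AtPrime p))
    (mem s hs)
  rw [Ideal.map_map, ← IsScalarTower.algebraMap_eq,
    Localization.AtPrime.map_eq_maximalIdeal] at h2
  exact h2

/-- `depth_{R_p}(M_p) ≥ depth_{R_q}(M_q) − dim(R_q / p R_q)` for primes `p ⊆ q`. -/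
theorem stmt16 {R : Type*} [CommRing R] [IsNoetherianRing R] [IsLocalRing R]
    (M : Type*) [AddCommGroup M] [Module R M] [Module.Finite R M]
    (p q : Ideal R) [p.IsPrime] [q.IsPrime] (hpq : p ≤ q) :
    (rdepth (maximalIdeal (Localization.AtPrime q))
        (LocalizedModule q.primeCompl M) : WithBot ℕ∞) ≤
      (rdepth (maximalIdeal (Localization.AtPrime p))
        (LocalizedModule p.primeCompl M) : WithBot ℕ∞) +
      Order.krullDim
        (PrimeSpectrum
          (Localization.AtPrime q ⧸ p.map (algebraMap R (Localization.AtPrime q)))) := by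
  have hI : p.map (algebraMap R (Localization.AtPrime q)) ≤
      maximalIdeal (Localization.AtPrime q) := by
    rw [← Localization.AtPrime.map_eq_maximalIdeal]
    exact Ideal.map_mono hpq
  have : Nontrivial (Localization.AtPrime q ⧸ p.map (algebraMap R (Localization.AtPrime q))) :=
    Ideal.Quotient.nontrivial_iff.mpr fun h =>
      (maximalIdeal.isMaximal (Localization.AtPrime q)).ne_top (top_le_iff.mp (h ▸ hI))
  have h0 : 0 ≤ ringKrullDim
      (Localization.AtPrime q ⧸ p.map (algebraMap R (Localization.AtPrime q))) :=
    ringKrullDim_nonneg_of_nontrivial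
  change _ ≤ _ + ringKrullDim _
  generalize hk : ringKrullDim
    (Localization.AtPrime q ⧸ p.map (algebraMap R (Localization.AtPrime q))) = k at h0
  have : Module.Finite (Localization.AtPrime q) (LocalizedModule q.primeCompl M) :=
    Module.Finite.of_isLocalizedModule q.primeCompl (LocalizedModule.mkLinearMap q.primeCompl M)
  cases k with
  | bot => simp at h0
  | coe k =>
    rw [← WithBot.coe_add, WithBot.coe_le_coe]
    cases k with
    | top => simp
    | coe d =>
      refine sSup_le ?_
      rintro _ ⟨rs, rfl, mem, reg⟩
      obtain ⟨rs1, hl1, hm1, hr1⟩ := ischebeck _ rs mem reg d _ hI hk.le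
      obtain ⟨rs2, hl2, hm2, hr2⟩ := transfer_aux M p q hpq rs1 hm1 hr1
      have h3 : (rs2.length : ℕ∞) ≤ rdepth (maximalIdeal (Localization.AtPrime p))
        (LocalizedModule p.primeCompl M) := le_sSup ⟨rs2, rfl, hm2, hr2⟩
      refine le_trans ?_ (add_le_add_left h3 _)
      norm_cast
      omega
end
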